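/- Suppose Assumptions 1 and 2 hold, and let ε > 0 be such that εI_N ≺ R (Loewner order). Then there exists n_ε ≥ 1 such that for every n ≥ n_ε one has ∇²F_n(h_n) ⪰ R − εI_N (in particular ∇²F_n(h_n) is positive definite) and F_n(h_n) − inf F_n ≤ (1/2)(1 + ε) ∇F_n(h_n)ᵀ (∇²F_n(h_n))⁻¹ ∇F_n(h_n). -/

import Mathlib

open Matrix Filter Topology

noncomputable section

/-- Identification of `EuclideanSpace ℝ (Fin N)` with plain tuples `Fin N → ℝ`. -/
def toEuc {N : ℕ} (v : Fin N → ℝ) : EuclideanSpace ℝ (Fin N) :=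
  (WithLp.equiv 2 (Fin N → ℝ)).symm v

def ofEuc {N : ℕ} (v : EuclideanSpace ℝ (Fin N)) : Fin N → ℝ :=
  WithLp.equiv 2 (Fin N → ℝ) v

/-- The quadratic form `vᵀ M v`. -/
def qf {N : ℕ} (M : Matrix (Fin N) (Fin N) ℝ)
    (v : EuclideanSpace ℝ (Fin N)) : ℝ :=
  ofEuc v ⬝ᵥ M.mulVec (ofEuc v)

/-- Matrix-vector product `M v`, viewed in `EuclideanSpace`. -/
def mulE {N : ℕ} (M : Matrix (Fin N) (Fin N) ℝ)
    (v : EuclideanSpace ℝ (Fin N)) : EuclideanSpace ℝ (Fin N) :=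
  toEuc (M.mulVec (ofEuc v))

/-- The range of the matrix `D`, i.e. `{D u : u ∈ ℝ^M}`, as a subset of `EuclideanSpace`. -/
def rangeD {N M : ℕ} (D : Matrix (Fin N) (Fin M) ℝ) : Set (EuclideanSpace ℝ (Fin N)) :=
  {x | ∃ u : Fin M → ℝ, x = toEuc (D.mulVec u)}

open scoped Classical in
/-- The Moore–Penrose pseudo-inverse of a real matrix, defined via its characterizing
(Penrose) equations; it exists and is unique for every real matrix. -/
def pinv {m n : ℕ} (A : Matrix (Fin m) (Fin n) ℝ) : Matrix (Fin n) (Fin m) ℝ :=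
  if h : ∃ B : Matrix (Fin n) (Fin m) ℝ,
      A * B * A = A ∧ B * A * B = B ∧ (A * B)ᵀ = A * B ∧ (B * A)ᵀ = B * A
  then h.choose else 0

end

/-!
An MM step decreases `Fₙ` by a fixed multiple of `‖∇Fₙ(hₙ)‖²`: test the surrogate at one gradient
step, which lies in the subspace. Since `Rₙ` is eventually uniformly positive definite, `Fₙ + K`
dominates a multiple of `‖·‖² + 1` for a suitable constant `K`, so replacing `Fₙ` by `Fₙ₊₁` costs
only a factor `1 + eₙ` with `eₙ` summable. A Grönwall argument then bounds the iterates and makes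
the squared gradients summable. Hence the gradient of the limit objective tends to `0` along the
iterates, and as this gradient is strongly monotone the iterates form a Cauchy sequence.

Near the limit the Hessian of `Fₙ` varies by at most a factor `1 + ε`, so completing the square
bounds `Fₙ(hₙ) - Fₙ(y)` for `y` near `hₙ`; for the other `y`, strong convexity makes this difference
nonpositive as soon as the gradient at `hₙ` is small.
-/

section

open scoped RealInnerProductSpace Ring

section SecondOrder

variable {E : Type*} [NormedAddCommGroup E] [InnerProductSpace ℝ E]

lemma abs_inner_map_self_le (A : E →L[ℝ] E) (u : E) : |⟪A u, u⟫| ≤ ‖A‖ * ‖u‖ ^ 2 := by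
  calc |⟪A u, u⟫| ≤ ‖A u‖ * ‖u‖ := abs_real_inner_le_norm _ _
    _ ≤ ‖A‖ * ‖u‖ * ‖u‖ := by gcongr; exact A.le_opNorm u
    _ = ‖A‖ * ‖u‖ ^ 2 := by ring

lemma hasDerivAt_add_smul (x d : E) (t : ℝ) : HasDerivAt (fun t : ℝ => x + t • d) d t := by
  simpa using ((hasDerivAt_id t).smul_const d).const_add x

lemma add_add_half_le_of_le_second_deriv {φ φ' φ'' : ℝ → ℝ} {q : ℝ}
    (hφ : ∀ t, HasDerivAt φ (φ' t) t) (hφ' : ∀ t, HasDerivAt φ' (φ'' t) t)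
    (hq : ∀ t ∈ Set.Icc (0 : ℝ) 1, q ≤ φ'' t) : φ 0 + φ' 0 + q / 2 ≤ φ 1 := by
  have hderiv (t : ℝ) : HasDerivAt (fun t => φ t - q / 2 * t ^ 2) (φ' t - q * t) t :=
    ((hφ t).fun_sub ((hasDerivAt_pow 2 t).const_mul (q / 2))).congr_deriv
      (by norm_num; ring)
  have hderiv₂ (t : ℝ) : HasDerivAt (fun t => φ' t - q * t) (φ'' t - q) t := by
    simpa using (hφ' t).fun_sub ((hasDerivAt_id t).const_mul q)
  have hconvex : ConvexOn ℝ (Set.Icc 0 1) (fun t => φ t - q / 2 * t ^ 2) :=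
    convexOn_of_hasDerivWithinAt2_nonneg (convex_Icc 0 1)
      (fun t _ => (hderiv t).continuousAt.continuousWithinAt)
      (fun t _ => (hderiv t).hasDerivWithinAt) (fun t _ => (hderiv₂ t).hasDerivWithinAt)
      (fun t ht => sub_nonneg.2 (hq t (interior_subset ht)))
  have hslope := hconvex.le_slope_of_hasDerivAt (by simp) (by simp) one_pos (hderiv 0)
  simp only [slope_def_field] at hslope
  linarith

lemma hasDerivAt_inner_comp_add_smul {g : E → E} {x d : E} {t : ℝ} {H' : E →L[ℝ] E}
    (hg : HasFDerivAt g H' (x + t • d)) :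
    HasDerivAt (fun t : ℝ => ⟪g (x + t • d), d⟫) ⟪H' d, d⟫ t := by
  simpa [Function.comp_def] using (hg.comp_hasDerivAt t (hasDerivAt_add_smul x d t)).inner ℝ
    (hasDerivAt_const t d)

lemma mul_norm_sub_le_norm_sub_of_le_fderiv {g : E → E} {H : E → E →L[ℝ] E} {c : ℝ}
    (hg : ∀ x, HasFDerivAt g (H x) x) (hH : ∀ x d, c * ‖d‖ ^ 2 ≤ ⟪H x d, d⟫) (x y : E) :
    c * ‖x - y‖ ≤ ‖g x - g y‖ := by
  have hderiv (t : ℝ) :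
      HasDerivAt (fun t : ℝ => ⟪g (y + t • (x - y)), x - y⟫ - c * ‖x - y‖ ^ 2 * t)
        (⟪H (y + t • (x - y)) (x - y), x - y⟫ - c * ‖x - y‖ ^ 2) t := by
    simpa using (hasDerivAt_inner_comp_add_smul (hg (y + t • (x - y)))).fun_sub
      ((hasDerivAt_id t).const_mul (c * ‖x - y‖ ^ 2))
  have hmono := monotone_of_hasDerivAt_nonneg hderiv fun t => sub_nonneg.2 (hH _ _)
  have hinner : c * ‖x - y‖ ^ 2 ≤ ⟪g x - g y, x - y⟫ := by
    have hends := hmono zero_le_one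
    simp only [zero_smul, add_zero, one_smul, add_sub_cancel, mul_zero, mul_one, sub_zero] at hends
    rw [inner_sub_left]
    linarith
  rcases (norm_nonneg (x - y)).eq_or_lt with hxy | hxy
  · simp [← hxy]
  · refine le_of_mul_le_mul_right ?_ hxy
    calc c * ‖x - y‖ * ‖x - y‖ = c * ‖x - y‖ ^ 2 := by ring
      _ ≤ ⟪g x - g y, x - y⟫ := hinner
      _ ≤ ‖g x - g y‖ * ‖x - y‖ := real_inner_le_norm _ _

lemma convexOn_comp_add_smul {f : E → ℝ} (hf : ConvexOn ℝ Set.univ f) (x d : E) :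
    ConvexOn ℝ Set.univ (fun t : ℝ => f (x + t • d)) := by
  simpa [Function.comp_def, AffineMap.lineMap_apply, add_comm] using
    hf.comp_affineMap (AffineMap.lineMap x (x + d) : ℝ →ᵃ[ℝ] E)

variable [CompleteSpace E] {f : E → ℝ} {g : E → E} {H : E → E →L[ℝ] E}

lemma hasDerivAt_comp_add_smul {x d g' : E} {t : ℝ} (hf : HasGradientAt f g' (x + t • d)) :
    HasDerivAt (fun t : ℝ => f (x + t • d)) ⟪g', d⟫ t := by
  simpa [Function.comp_def] using hf.hasFDerivAt.comp_hasDerivAt t (hasDerivAt_add_smul x d t)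

lemma add_inner_le_of_convexOn {x g' : E} (hf : HasGradientAt f g' x)
    (hconv : ConvexOn ℝ Set.univ f) (d : E) : f x + ⟪g', d⟫ ≤ f (x + d) := by
  have hderiv : HasDerivAt (fun t : ℝ => f (x + t • d)) ⟪g', d⟫ 0 :=
    hasDerivAt_comp_add_smul (by simpa using hf)
  have hslope := (convexOn_comp_add_smul hconv x d).le_slope_of_hasDerivAt
    (Set.mem_univ 0) (Set.mem_univ 1) one_pos hderiv
  simp only [slope_def_field, one_smul, zero_smul, add_zero, sub_zero, div_one] at hslope
  linarith

lemma inner_hessian_nonneg_of_convexOn (hf : ∀ x, HasGradientAt f (g x) x)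
    (hg : ∀ x, HasFDerivAt g (H x) x) (hconv : ConvexOn ℝ Set.univ f) (x d : E) :
    0 ≤ ⟪H x d, d⟫ := by
  have hderiv (t : ℝ) := hasDerivAt_comp_add_smul (t := t) (hf (x + t • d))
  have hmono : Monotone fun t : ℝ => ⟪g (x + t • d), d⟫ := by
    rw [← monotoneOn_univ, ← funext fun t => (hderiv t).deriv]
    exact (convexOn_comp_add_smul hconv x d).monotoneOn_deriv fun t _ => (hderiv t).differentiableAt
  exact (hasDerivAt_inner_comp_add_smul (t := 0) (by simpa using hg x)).nonneg_of_monotone hmono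

lemma isSelfAdjoint_hessian (hf : ∀ x, HasGradientAt f (g x) x) {x : E} {H' : E →L[ℝ] E}
    (hg : HasFDerivAt g H' x) : IsSelfAdjoint H' := by
  rw [ContinuousLinearMap.isSelfAdjoint_iff_isSymmetric]
  intro u v
  have hfderiv : HasFDerivAt (fun x => InnerProductSpace.toDual ℝ E (g x))
      ((InnerProductSpace.toDual ℝ E).toContinuousLinearEquiv.toContinuousLinearMap ∘L H') x :=
    (InnerProductSpace.toDual ℝ E).toContinuousLinearEquiv.hasFDerivAt.comp x hg
  have hsymm := second_derivative_symmetric (fun y => (hf y).hasFDerivAt) hfderiv u v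
  simpa [real_inner_comm] using hsymm

lemma add_inner_add_half_le_of_le_hessian (hf : ∀ x, HasGradientAt f (g x) x)
    (hg : ∀ x, HasFDerivAt g (H x) x) {x d : E} {q : ℝ}
    (hq : ∀ z ∈ segment ℝ x (x + d), q ≤ ⟪H z d, d⟫) :
    f x + ⟪g x, d⟫ + q / 2 ≤ f (x + d) := by
  have htaylor := add_add_half_le_of_le_second_deriv
    (fun t => hasDerivAt_comp_add_smul (hf (x + t • d)))
    (fun t => hasDerivAt_inner_comp_add_smul (hg (x + t • d)))
    (fun t ht => hq _ (by rw [segment_eq_image']; exact ⟨t, ht, by simp⟩))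
  simpa using htaylor

lemma neg_half_mul_inner_le {P : E →L[ℝ] E} (hP : IsSelfAdjoint P) (hpos : ∀ u, 0 ≤ ⟪P u, u⟫)
    {s : ℝ} (hs : 0 < s) (w d : E) :
    -(1 / 2 * s * ⟪P w, w⟫) ≤ ⟪P w, d⟫ + ⟪P d, d⟫ / s / 2 := by
  have hsquare : ⟪P (d + s • w), d + s • w⟫ =
      2 * s * (⟪P w, d⟫ + ⟪P d, d⟫ / s / 2 + 1 / 2 * s * ⟪P w, w⟫) := by
    have hsymm : ⟪P d, w⟫ = ⟪P w, d⟫ := by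
      rw [real_inner_comm, hP.isSymmetric.apply_clm]
    simp only [map_add, map_smul, inner_add_left, inner_add_right, real_inner_smul_left,
      real_inner_smul_right, hsymm]
    field_simp
    ring
  have hnonneg := nonneg_of_mul_nonneg_right (hsquare ▸ hpos (d + s • w)) (by positivity)
  linarith

lemma sub_le_half_mul_inner_of_hessian {c ε ρ : ℝ} (hf : ∀ x, HasGradientAt f (g x) x)
    (hg : ∀ x, HasFDerivAt g (H x) x) (hc : 0 < c) (hε : 0 < ε)
    (hH : ∀ z d, c * ‖d‖ ^ 2 ≤ ⟪H z d, d⟫) {x w : E}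
    (hnear : ∀ z ∈ Metric.ball x ρ, ‖H x - H z‖ ≤ ε * c) (hgrad : ‖g x‖ ≤ c * ρ / 2)
    (hw : H x w = g x) (y : E) : f x - f y ≤ 1 / 2 * (1 + ε) * ⟪g x, w⟫ := by
  have hpos (u : E) : 0 ≤ ⟪H x u, u⟫ := le_trans (by positivity) (hH x u)
  obtain ⟨d, rfl⟩ : ∃ d, y = x + d := ⟨y - x, by abel⟩
  rcases lt_or_ge ‖d‖ ρ with hd | hd
  · have hhess : ∀ z ∈ segment ℝ x (x + d), ⟪H x d, d⟫ / (1 + ε) ≤ ⟪H z d, d⟫ := by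
      intro z hz
      have hzball : z ∈ Metric.ball x ρ := (convex_ball x ρ).segment_subset
        (Metric.mem_ball_self ((norm_nonneg d).trans_lt hd)) (by simpa using hd) hz
      have hdiff : ⟪H x d, d⟫ - ⟪H z d, d⟫ ≤ ε * ⟪H z d, d⟫ :=
        calc ⟪H x d, d⟫ - ⟪H z d, d⟫ = ⟪(H x - H z) d, d⟫ := by
              rw [_root_.sub_apply, inner_sub_left]
          _ ≤ ‖H x - H z‖ * ‖d‖ ^ 2 := (abs_le.1 (abs_inner_map_self_le _ _)).2
          _ ≤ ε * c * ‖d‖ ^ 2 := by gcongr; exact hnear z hzball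
          _ = ε * (c * ‖d‖ ^ 2) := by ring
          _ ≤ ε * ⟪H z d, d⟫ := by gcongr; exact hH z d
      rw [div_le_iff₀ (by positivity)]
      linarith
    have htaylor := add_inner_add_half_le_of_le_hessian hf hg hhess
    have hsquare := neg_half_mul_inner_le (isSelfAdjoint_hessian hf (hg x)) hpos
      (by positivity : 0 < 1 + ε) w d
    rw [hw] at hsquare
    linarith
  · have htaylor := add_inner_add_half_le_of_le_hessian hf hg fun z (_ : z ∈ segment ℝ x (x + d)) =>
      hH z d
    have hlinear : -(c * ‖d‖ ^ 2 / 2) ≤ ⟪g x, d⟫ :=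
      calc -(c * ‖d‖ ^ 2 / 2) = -(c * ‖d‖ / 2 * ‖d‖) := by ring
        _ ≤ -(‖g x‖ * ‖d‖) := by
          gcongr
          exact hgrad.trans (by gcongr)
        _ ≤ ⟪g x, d⟫ := (abs_le.1 (abs_real_inner_le_norm _ _)).1
    have hright : 0 ≤ 1 / 2 * (1 + ε) * ⟪g x, w⟫ := mul_nonneg (by positivity) (hw ▸ hpos w)
    linarith

lemma continuous_hessian (hf : ContDiff ℝ 2 f) (hg : ∀ x, HasGradientAt f (g x) x)
    (hH : ∀ x, HasFDerivAt g (H x) x) : Continuous H := by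
  have hgrad : ContDiff ℝ 1 g := by
    rw [funext fun x => (InnerProductSpace.toDual ℝ E).eq_symm_apply.2
      (hg x).hasFDerivAt.fderiv.symm]
    exact (InnerProductSpace.toDual ℝ E).symm.contDiff.comp (hf.fderiv_right le_rfl)
  rw [funext fun x => (hH x).fderiv.symm]
  exact hgrad.continuous_fderiv one_ne_zero

end SecondOrder

section QuadObjective

variable {E : Type*} [NormedAddCommGroup E] [InnerProductSpace ℝ E]

/-- The penalized quadratic objective `x ↦ ½⟪A x, x⟫ - ⟪b, x⟫ + Ψ x`. -/
noncomputable def quadObjective (A : E →L[ℝ] E) (b : E) (Ψ : E → ℝ) (x : E) : ℝ :=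
  1 / 2 * ⟪A x, x⟫ - ⟪b, x⟫ + Ψ x

/-- The quadratic model at `x` of a function with value `f x` and gradient `p` at `x`, with
curvature operator `A`. -/
noncomputable def quadSurrogate (f : E → ℝ) (p : E) (A : E →L[ℝ] E) (x y : E) : ℝ :=
  f x + ⟪p, y - x⟫ + 1 / 2 * ⟪A (y - x), y - x⟫

variable {A A' : E →L[ℝ] E} {b b' p x : E} {Ψ : E → ℝ}

lemma quadObjective_le_add :
    quadObjective A' b' Ψ x ≤
      quadObjective A b Ψ x + (‖A - A'‖ + ‖b - b'‖) * (‖x‖ ^ 2 + 1) := by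
  have hquad : ⟪A' x, x⟫ - ⟪A x, x⟫ ≤ ‖A - A'‖ * ‖x‖ ^ 2 := by
    rw [norm_sub_rev, ← inner_sub_left, ← _root_.sub_apply]
    exact (abs_le.1 (abs_inner_map_self_le _ x)).2
  have hlin : ⟪b, x⟫ - ⟪b', x⟫ ≤ ‖b - b'‖ * ‖x‖ := by
    rw [← inner_sub_left]
    exact real_inner_le_norm _ _
  have hnorm : ‖x‖ ≤ ‖x‖ ^ 2 + 1 := by nlinarith [sq_nonneg (‖x‖ - 1)]
  have hlin' := mul_le_mul_of_nonneg_left hnorm (norm_nonneg (b - b'))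
  have hquad' : 0 ≤ ‖A - A'‖ * (‖x‖ ^ 2 + 2) := by positivity
  unfold quadObjective
  linarith

lemma quadObjective_add_le_one_add_mul {κ K : ℝ} (hκ : 0 < κ)
    (hx : κ * (‖x‖ ^ 2 + 1) ≤ quadObjective A b Ψ x + K) :
    quadObjective A' b' Ψ x + K ≤
      (1 + (‖A - A'‖ + ‖b - b'‖) / κ) * (quadObjective A b Ψ x + K) :=
  calc quadObjective A' b' Ψ x + K
      ≤ quadObjective A b Ψ x + (‖A - A'‖ + ‖b - b'‖) * (‖x‖ ^ 2 + 1) + K := by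
        gcongr
        exact quadObjective_le_add
    _ = quadObjective A b Ψ x + (‖A - A'‖ + ‖b - b'‖) / κ * (κ * (‖x‖ ^ 2 + 1)) + K := by
        field_simp
    _ ≤ quadObjective A b Ψ x +
          (‖A - A'‖ + ‖b - b'‖) / κ * (quadObjective A b Ψ x + K) + K := by gcongr
    _ = (1 + (‖A - A'‖ + ‖b - b'‖) / κ) * (quadObjective A b Ψ x + K) := by ring

lemma mul_norm_sq_add_one_le_quadObjective_add {c β : ℝ} (hc : 0 < c)
    (hA : c * ‖x‖ ^ 2 ≤ ⟪A x, x⟫) (hb : ‖b - p‖ ≤ β) (hΨ : Ψ 0 + ⟪p, x⟫ ≤ Ψ x) :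
    c / 4 * (‖x‖ ^ 2 + 1) ≤ quadObjective A b Ψ x + (β ^ 2 / c + c / 4 - Ψ 0) := by
  have hlin : ⟪b, x⟫ - ⟪p, x⟫ ≤ β * ‖x‖ := by
    rw [← inner_sub_left]
    exact (real_inner_le_norm _ _).trans (by gcongr)
  have hyoung : β * ‖x‖ ≤ β ^ 2 / c + c / 4 * ‖x‖ ^ 2 := by
    have hsquare : β ^ 2 / c + c / 4 * ‖x‖ ^ 2 - β * ‖x‖ = (β - c / 2 * ‖x‖) ^ 2 / c := by
      field_simp
      ring
    rw [← sub_nonneg, hsquare]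
    positivity
  unfold quadObjective
  linarith

lemma hasFDerivAt_map_sub_add {g : E → E} {H' : E →L[ℝ] E} (hg : HasFDerivAt g H' x) :
    HasFDerivAt (fun y => A y - b + g y) (A + H') x :=
  (A.hasFDerivAt.sub_const b).fun_add hg

lemma hasGradientAt_quadObjective [CompleteSpace E] (hA : IsSelfAdjoint A)
    (hΨ : HasGradientAt Ψ p x) : HasGradientAt (quadObjective A b Ψ) (A x - b + p) x := by
  rw [hasGradientAt_iff_hasFDerivAt] at hΨ ⊢
  have hquad := (A.hasFDerivAt (x := x)).inner ℝ (hasFDerivAt_id x)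
  refine (((hquad.const_mul (1 / 2)).fun_sub
    ((innerSL ℝ b).hasFDerivAt (x := x))).fun_add hΨ).congr_fderiv ?_
  ext d
  have hsymm : ⟪A d, x⟫ = ⟪A x, d⟫ := by
    rw [real_inner_comm, hA.isSymmetric.apply_clm]
  simp [hsymm]
  ring

lemma le_sub_of_isMinOn_quadSurrogate {f : E → ℝ} {S : Submodule ℝ E} {L : ℝ} {x' : E}
    (hL : 0 < L) (hA : ∀ u, ⟪A u, u⟫ ≤ L * ‖u‖ ^ 2) (hx : x ∈ S) (hp : p ∈ S)
    (hmin : IsMinOn (quadSurrogate f p A x) S x') (hmaj : f x' ≤ quadSurrogate f p A x x') :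
    f x' ≤ f x - 1 / (2 * L) * ‖p‖ ^ 2 := by
  have htest : x - L⁻¹ • p ∈ S := S.sub_mem hx (S.smul_mem _ hp)
  calc f x' ≤ quadSurrogate f p A x x' := hmaj
    _ ≤ quadSurrogate f p A x (x - L⁻¹ • p) := hmin htest
    _ = f x - L⁻¹ * ‖p‖ ^ 2 + 1 / 2 * (L⁻¹ ^ 2 * ⟪A p, p⟫) := by
      simp only [quadSurrogate, sub_sub_cancel_left, map_neg, map_smul, inner_neg_left,
        inner_neg_right, real_inner_smul_left, real_inner_smul_right, real_inner_self_eq_norm_sq]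
      ring
    _ ≤ f x - L⁻¹ * ‖p‖ ^ 2 + 1 / 2 * (L⁻¹ ^ 2 * (L * ‖p‖ ^ 2)) := by
      gcongr
      exact hA p
    _ = f x - 1 / (2 * L) * ‖p‖ ^ 2 := by
      field_simp
      ring

end QuadObjective

section PerturbedDescent

variable {v e a : ℕ → ℝ}

lemma isBoundedUnder_of_le_one_add_mul (he : ∀ n, 0 ≤ e n) (hsum : Summable e)
    (hv : ∀ᶠ n in atTop, 0 ≤ v n) (hstep : ∀ᶠ n in atTop, v (n + 1) ≤ (1 + e n) * v n) :
    IsBoundedUnder (· ≤ ·) atTop v := by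
  obtain ⟨n₀, hn₀⟩ := (hv.and hstep).exists_forall_of_atTop
  refine isBoundedUnder_of_eventually_le (a := v n₀ * Real.exp (∑' n, e n)) ?_
  filter_upwards [eventually_ge_atTop n₀] with n hn
  calc v n ≤ v n₀ * Real.exp (∑ i ∈ Finset.Ico n₀ n, e i) := by
        simpa using discrete_gronwall (b := 0) (hn₀ n₀ le_rfl).1
          (fun k hk => by simpa using (hn₀ k hk).2) (fun k _ => he k) (fun _ _ => le_rfl) hn
    _ ≤ v n₀ * Real.exp (∑' n, e n) := by
        gcongr
        · exact (hn₀ n₀ le_rfl).1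
        · exact hsum.sum_le_tsum _ fun k _ => he k

lemma summable_of_le_one_add_mul_sub (he : ∀ n, 0 ≤ e n) (hsum : Summable e)
    (ha : ∀ n, 0 ≤ a n) (hv : ∀ᶠ n in atTop, 0 ≤ v n)
    (hstep : ∀ᶠ n in atTop, v (n + 1) ≤ (1 + e n) * v n - a n) : Summable a := by
  obtain ⟨C, hC⟩ := isBoundedUnder_of_le_one_add_mul he hsum hv
    (hstep.mono fun n hn => hn.trans (sub_le_self _ (ha n)))
  obtain ⟨n₀, hn₀⟩ :=
    (hv.and (hstep.and (eventually_map.1 hC))).exists_forall_of_atTop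
  have hsum' : Summable fun k => e (k + n₀) := (summable_nat_add_iff n₀).2 hsum
  have hC₀ : 0 ≤ C := (hn₀ n₀ le_rfl).1.trans (hn₀ n₀ le_rfl).2.2
  have hterm (k : ℕ) : a (k + n₀) ≤ C * e (k + n₀) + (v (k + n₀) - v (k + 1 + n₀)) := by
    obtain ⟨-, hnext, hle⟩ := hn₀ (k + n₀) (Nat.le_add_left _ _)
    rw [add_right_comm k n₀ 1] at hnext
    linarith [mul_le_mul_of_nonneg_left hle (he (k + n₀))]
  refine (summable_nat_add_iff n₀).1 <| summable_of_sum_range_le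
    (c := C * ∑' k, e (k + n₀) + v n₀) (fun k => ha _) fun m => ?_
  calc ∑ k ∈ Finset.range m, a (k + n₀)
      ≤ ∑ k ∈ Finset.range m, (C * e (k + n₀) + (v (k + n₀) - v (k + 1 + n₀))) :=
        Finset.sum_le_sum fun k _ => hterm k
    _ = C * ∑ k ∈ Finset.range m, e (k + n₀) + (v n₀ - v (m + n₀)) := by
        rw [Finset.sum_add_distrib, ← Finset.mul_sum,
          Finset.sum_range_sub' (fun k => v (k + n₀)), zero_add]
    _ ≤ C * ∑' k, e (k + n₀) + v n₀ := by
        gcongr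
        · exact hsum'.sum_le_tsum _ fun k _ => he _
        · exact sub_le_self _ (hn₀ _ (Nat.le_add_left _ _)).1

end PerturbedDescent

section LoewnerOrder

variable {E : Type*} [NormedAddCommGroup E] [InnerProductSpace ℝ E]

lemma inner_map_self_le_of_le {A B : E →L[ℝ] E} (hAB : A ≤ B) (u : E) :
    ⟪A u, u⟫ ≤ ⟪B u, u⟫ := by
  simpa [inner_sub_left] using (ContinuousLinearMap.le_def A B).1 hAB |>.inner_nonneg_left u

lemma mul_norm_sq_le_of_smul_one_le {c : ℝ} {A : E →L[ℝ] E} (hA : c • 1 ≤ A) (u : E) :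
    c * ‖u‖ ^ 2 ≤ ⟪A u, u⟫ := by
  simpa [real_inner_smul_left] using inner_map_self_le_of_le hA u

lemma eventually_forall_sub_le_inner_map_self {ι : Type*} {l : Filter ι} {T : ι → E →L[ℝ] E}
    {T' : E →L[ℝ] E} (hT : Tendsto T l (𝓝 T')) {δ : ℝ} (hδ : 0 < δ) :
    ∀ᶠ n in l, ∀ u, ⟪T' u, u⟫ - δ * ‖u‖ ^ 2 ≤ ⟪T n u, u⟫ := by
  filter_upwards [Metric.tendsto_nhds.1 hT δ hδ] with n hn u
  have hdiff : ⟪T' u, u⟫ - ⟪T n u, u⟫ ≤ ‖T' - T n‖ * ‖u‖ ^ 2 := by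
    rw [← inner_sub_left, ← _root_.sub_apply]
    exact (abs_le.1 (abs_inner_map_self_le _ u)).2
  have hnorm : ‖T' - T n‖ ≤ δ := by
    rw [← dist_eq_norm, dist_comm]
    exact hn.le
  linarith [mul_le_mul_of_nonneg_right hnorm (sq_nonneg ‖u‖)]

variable [CompleteSpace E]

lemma isUnit_of_mul_norm_sq_le {c : ℝ} (hc : 0 < c) {A : E →L[ℝ] E}
    (hA : ∀ u, c * ‖u‖ ^ 2 ≤ ⟪A u, u⟫) : IsUnit A :=
  A.isUnit_of_forall_le_norm_inner_map (c := ⟨c, hc.le⟩) hc fun u =>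
    (mul_comm _ _).trans_le ((hA u).trans (le_abs_self _))

lemma isSelfAdjoint_of_smul_one_le {c : ℝ} {A : E →L[ℝ] E} (hA : c • 1 ≤ A) :
    IsSelfAdjoint A := by
  simpa using ((ContinuousLinearMap.le_def _ A).1 hA).isSelfAdjoint.add
    ((IsSelfAdjoint.all c).smul (IsSelfAdjoint.one (E →L[ℝ] E)))

end LoewnerOrder

section Convergence

lemma exists_tendsto_of_forall_mul_norm_sub_le {E F : Type*} [NormedAddCommGroup E]
    [CompleteSpace E] [NormedAddCommGroup F] {G : E → F} {c : ℝ} (hc : 0 < c)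
    (hG : ∀ x y, c * ‖x - y‖ ≤ ‖G x - G y‖) {h : ℕ → E} {y : F}
    (hlim : Tendsto (fun n => G (h n)) atTop (𝓝 y)) : ∃ x, Tendsto h atTop (𝓝 x) := by
  have hanti : AntilipschitzWith c.toNNReal⁻¹ G :=
    AntilipschitzWith.of_le_mul_dist fun x y => by
      rw [dist_eq_norm, dist_eq_norm, NNReal.coe_inv, Real.coe_toNNReal _ hc.le, inv_mul_eq_div,
        le_div_iff₀' hc]
      exact hG x y
  have hle : map h atTop ≤ comap G (map (fun n => G (h n)) atTop) := le_comap_map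
  exact cauchySeq_tendsto_of_complete <|
    (hlim.cauchySeq.comap' hanti.comap_uniformity_le (neBot_of_le hle)).mono hle

lemma exists_eventually_forall_mem_ball_norm_sub_le {X F : Type*} [PseudoMetricSpace X]
    [SeminormedAddCommGroup F] {H : X → F} {x : X} (hH : ContinuousAt H x) {δ : ℝ}
    (hδ : 0 < δ) : ∃ ρ > 0, ∀ᶠ y in 𝓝 x, ∀ z ∈ Metric.ball y ρ, ‖H y - H z‖ ≤ δ := by
  obtain ⟨r, hr, hball⟩ := Metric.continuousAt_iff.1 hH (δ / 2) (half_pos hδ)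
  refine ⟨r / 2, half_pos hr, ?_⟩
  filter_upwards [Metric.ball_mem_nhds x (half_pos hr)] with y hy z hz
  have hzx : dist z x < r := by
    linarith [dist_triangle z y x, Metric.mem_ball.1 hy, Metric.mem_ball.1 hz]
  have hyx : dist y x < r := (Metric.mem_ball.1 hy).trans (half_lt_self hr)
  rw [← dist_eq_norm]
  linarith [dist_triangle_right (H y) (H z) (H x), hball hyx, hball hzx]

lemma tendsto_apply_of_tendsto_zero_of_isBoundedUnder {𝕜 ι E F : Type*}
    [NontriviallyNormedField 𝕜] [NormedAddCommGroup E] [NormedSpace 𝕜 E] [NormedAddCommGroup F]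
    [NormedSpace 𝕜 F] {l : Filter ι} {T : ι → E →L[𝕜] F} {h : ι → E} (hT : Tendsto T l (𝓝 0))
    (hh : IsBoundedUnder (· ≤ ·) l fun n => ‖h n‖) :
    Tendsto (fun n => T n (h n)) l (𝓝 0) := by
  obtain ⟨C, hC⟩ := hh
  refine squeeze_zero_norm' (a := fun n => ‖T n‖ * C) ?_ ?_
  · filter_upwards [eventually_map.1 hC] with n hn
    exact (T n).le_opNorm_of_le hn
  · simpa using hT.norm.mul_const C

variable {E : Type*} [NormedAddCommGroup E] [InnerProductSpace ℝ E] {T : ℕ → E →L[ℝ] E}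
  {b h : ℕ → E} {b' p : E} {Ψ : E → ℝ} {a : ℕ → ℝ} {c : ℝ}

lemma isBoundedUnder_and_summable_of_sufficient_decrease (hc : 0 < c)
    (hT : ∀ᶠ n in atTop, ∀ u, c * ‖u‖ ^ 2 ≤ ⟪T n u, u⟫)
    (hTsum : Summable fun n => ‖T n - T (n + 1)‖)
    (hb : Tendsto b atTop (𝓝 b')) (hbsum : Summable fun n => ‖b n - b (n + 1)‖)
    (hΨ : ∀ x, Ψ 0 + ⟪p, x⟫ ≤ Ψ x) (ha : ∀ n, 0 ≤ a n)
    (hdec : ∀ᶠ n in atTop, quadObjective (T n) (b n) Ψ (h (n + 1)) ≤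
      quadObjective (T n) (b n) Ψ (h n) - a n) :
    IsBoundedUnder (· ≤ ·) atTop (fun n => ‖h n‖) ∧ Summable a := by
  obtain ⟨β, hβ⟩ := (hb.sub_const p).norm.bddAbove_range
  set K : ℝ := β ^ 2 / c + c / 4 - Ψ 0
  set v : ℕ → ℝ := fun n => quadObjective (T n) (b n) Ψ (h n) + K
  set e : ℕ → ℝ := fun n => (‖T n - T (n + 1)‖ + ‖b n - b (n + 1)‖) / (c / 4)
  have he (n : ℕ) : 0 ≤ e n := by positivity
  have hcoercive : ∀ᶠ n in atTop, ∀ x,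
      c / 4 * (‖x‖ ^ 2 + 1) ≤ quadObjective (T n) (b n) Ψ x + K := by
    filter_upwards [hT] with n hn x
    exact mul_norm_sq_add_one_le_quadObjective_add hc (hn x) (hβ ⟨n, rfl⟩) (hΨ x)
  have hstep : ∀ᶠ n in atTop, v (n + 1) ≤ (1 + e n) * v n - a n := by
    filter_upwards [hcoercive, hdec] with n hn hdec
    calc v (n + 1)
        ≤ (1 + e n) * (quadObjective (T n) (b n) Ψ (h (n + 1)) + K) :=
          quadObjective_add_le_one_add_mul (by positivity) (hn (h (n + 1)))
      _ ≤ (1 + e n) * (v n - a n) :=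
          mul_le_mul_of_nonneg_left (by simp only [v]; linarith) (by linarith [he n])
      _ ≤ (1 + e n) * v n - a n := by linarith [mul_nonneg (he n) (ha n)]
  have hesum : Summable e := (hTsum.add hbsum).div_const _
  have hv : ∀ᶠ n in atTop, 0 ≤ v n :=
    hcoercive.mono fun n hn => le_trans (by positivity) (hn (h n))
  refine ⟨?_, summable_of_le_one_add_mul_sub he hesum ha hv hstep⟩
  obtain ⟨C, hC⟩ := isBoundedUnder_of_le_one_add_mul he hesum hv
    (hstep.mono fun n hn => hn.trans (sub_le_self _ (ha n)))
  refine isBoundedUnder_of_eventually_le (a := 4 / c * C) ?_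
  filter_upwards [eventually_map.1 hC, hcoercive] with n hle hcoer
  calc ‖h n‖ ≤ ‖h n‖ ^ 2 + 1 := by nlinarith [sq_nonneg (‖h n‖ - 1)]
    _ = 4 / c * (c / 4 * (‖h n‖ ^ 2 + 1)) := by field_simp
    _ ≤ 4 / c * C := by
      gcongr
      exact (hcoer (h n)).trans hle

end Convergence

section SufficientDecrease

variable {E : Type*} [NormedAddCommGroup E] [InnerProductSpace ℝ E] {T : ℕ → E →L[ℝ] E}
  {T' : E →L[ℝ] E} {b h : ℕ → E} {b' : E} {Ψ : E → ℝ} {g : E → E} {H : E → E →L[ℝ] E} {c γ : ℝ}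

lemma eventually_forall_half_mul_norm_sq_le (hc : 0 < c) (hcT : c • 1 ≤ T')
    (hT : Tendsto T atTop (𝓝 T')) :
    ∀ᶠ n in atTop, ∀ u, c / 2 * ‖u‖ ^ 2 ≤ ⟪T n u, u⟫ := by
  filter_upwards [eventually_forall_sub_le_inner_map_self hT (half_pos hc)] with n hn u
  linarith [hn u, mul_norm_sq_le_of_smul_one_le hcT u]

variable [CompleteSpace E]

lemma tendsto_gradient_and_iterates_of_sufficient_decrease (hc : 0 < c) (hcT : c • 1 ≤ T')
    (hT : Tendsto T atTop (𝓝 T')) (hTsum : Summable fun n => ‖T n - T (n + 1)‖)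
    (hb : Tendsto b atTop (𝓝 b')) (hbsum : Summable fun n => ‖b n - b (n + 1)‖)
    (hΨ : ConvexOn ℝ Set.univ Ψ) (hg : ∀ x, HasGradientAt Ψ (g x) x)
    (hH : ∀ x, HasFDerivAt g (H x) x) (hγ : 0 < γ)
    (hdec : ∀ᶠ n in atTop, quadObjective (T n) (b n) Ψ (h (n + 1)) ≤
      quadObjective (T n) (b n) Ψ (h n) - γ * ‖T n (h n) - b n + g (h n)‖ ^ 2) :
    Tendsto (fun n => T n (h n) - b n + g (h n)) atTop (𝓝 0) ∧
      ∃ x, Tendsto h atTop (𝓝 x) := by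
  obtain ⟨hbounded, hsummable⟩ := isBoundedUnder_and_summable_of_sufficient_decrease
    (half_pos hc) (eventually_forall_half_mul_norm_sq_le hc hcT hT) hTsum hb hbsum
    (fun x => by simpa using add_inner_le_of_convexOn (hg 0) hΨ x) (fun n => by positivity) hdec
  have hgrad : Tendsto (fun n => T n (h n) - b n + g (h n)) atTop (𝓝 0) := by
    have hsq := hsummable.tendsto_atTop_zero.const_mul γ⁻¹
    simp only [inv_mul_cancel_left₀ hγ.ne', mul_zero] at hsq
    exact tendsto_zero_iff_norm_tendsto_zero.2 (by simpa using hsq.sqrt)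
  have hstrong (x y : E) : c * ‖x - y‖ ≤ ‖(T' x - b' + g x) - (T' y - b' + g y)‖ :=
    mul_norm_sub_le_norm_sub_of_le_fderiv (fun x => hasFDerivAt_map_sub_add (hH x))
      (fun x d => by
        rw [_root_.add_apply, inner_add_left]
        linarith [mul_norm_sq_le_of_smul_one_le hcT d,
          inner_hessian_nonneg_of_convexOn hg hH hΨ x d])
      x y
  have hlimgrad : Tendsto (fun n => T' (h n) - b' + g (h n)) atTop (𝓝 0) := by
    have hoperator : Tendsto (fun n => (T n - T') (h n)) atTop (𝓝 0) :=
      tendsto_apply_of_tendsto_zero_of_isBoundedUnder (by simpa using hT.sub_const T') hbounded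
    have hlim := (hgrad.sub hoperator).add (hb.sub_const b')
    simp only [sub_self, add_zero, _root_.sub_apply] at hlim
    exact hlim.congr fun n => by abel
  exact ⟨hgrad, exists_tendsto_of_forall_mul_norm_sub_le hc hstrong hlimgrad⟩

lemma eventually_sub_smul_one_le_of_tendsto (hcT : c • 1 ≤ T')
    (hT : Tendsto T atTop (𝓝 T')) (hTadj : ∀ n, IsSelfAdjoint (T n))
    (hΨ : ConvexOn ℝ Set.univ Ψ) (hg : ∀ x, HasGradientAt Ψ (g x) x)
    (hH : ∀ x, HasFDerivAt g (H x) x) {ε : ℝ} (hε : 0 < ε) :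
    ∀ᶠ n in atTop, ∀ x, T' - ε • 1 ≤ T n + H x := by
  filter_upwards [eventually_forall_sub_le_inner_map_self hT hε] with n hn x
  have hadj : IsSelfAdjoint (T n + H x - (T' - ε • 1)) :=
    ((hTadj n).add (isSelfAdjoint_hessian hg (hH x))).sub
      ((isSelfAdjoint_of_smul_one_le hcT).sub ((IsSelfAdjoint.all ε).smul (IsSelfAdjoint.one _)))
  rw [ContinuousLinearMap.le_def, ContinuousLinearMap.isPositive_iff']
  refine ⟨hadj, fun u => ?_⟩
  simp only [_root_.sub_apply, _root_.add_apply, _root_.smul_apply, one_apply_eq_self,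
    inner_sub_left, inner_add_left, real_inner_smul_left, real_inner_self_eq_norm_sq]
  linarith [hn u, inner_hessian_nonneg_of_convexOn hg hH hΨ x u]

lemma eventually_sub_iInf_le_of_tendsto (hc : 0 < c) (hcT : c • 1 ≤ T')
    (hT : Tendsto T atTop (𝓝 T')) (hTadj : ∀ n, IsSelfAdjoint (T n))
    (hΨ : ConvexOn ℝ Set.univ Ψ) (hg : ∀ x, HasGradientAt Ψ (g x) x)
    (hH : ∀ x, HasFDerivAt g (H x) x) {x : E} (hHx : ContinuousAt H x)
    (hgrad : Tendsto (fun n => T n (h n) - b n + g (h n)) atTop (𝓝 0))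
    (hh : Tendsto h atTop (𝓝 x)) {ε : ℝ} (hε : 0 < ε) :
    ∀ᶠ n in atTop, IsUnit (T n + H (h n)) ∧
      quadObjective (T n) (b n) Ψ (h n) - ⨅ y, quadObjective (T n) (b n) Ψ y ≤
        1 / 2 * (1 + ε) * ⟪T n (h n) - b n + g (h n),
          (T n + H (h n))⁻¹ʳ (T n (h n) - b n + g (h n))⟫ := by
  obtain ⟨ρ, hρ, hnear⟩ :=
    exists_eventually_forall_mem_ball_norm_sub_le hHx (by positivity : 0 < ε * (c / 2))
  have hsmall := (tendsto_zero_iff_norm_tendsto_zero.1 hgrad).eventually_le_const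
    (by positivity : 0 < c / 2 * ρ / 2)
  filter_upwards [eventually_forall_half_mul_norm_sq_le hc hcT hT, hh.eventually hnear, hsmall]
    with n hTn hnear hsmall
  have hhess (z d : E) : c / 2 * ‖d‖ ^ 2 ≤ ⟪(T n + H z) d, d⟫ := by
    rw [_root_.add_apply, inner_add_left]
    linarith [hTn d, inner_hessian_nonneg_of_convexOn hg hH hΨ z d]
  have hunit : IsUnit (T n + H (h n)) := isUnit_of_mul_norm_sq_le (half_pos hc) (hhess (h n))
  refine ⟨hunit, sub_le_comm.1 (le_ciInf fun y => sub_le_comm.1 ?_)⟩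
  refine sub_le_half_mul_inner_of_hessian (fun z => hasGradientAt_quadObjective (hTadj n) (hg z))
    (fun z => hasFDerivAt_map_sub_add (hH z)) (half_pos hc) hε hhess
    (fun z hz => by simpa using hnear z hz) hsmall ?_ y
  rw [← mul_apply_eq_comp, Ring.mul_inverse_cancel _ hunit, one_apply_eq_self]

end SufficientDecrease

theorem mm_lemma_suboptimality_bound_general {E : Type*} [NormedAddCommGroup E]
    [InnerProductSpace ℝ E] [CompleteSpace E] {T : ℕ → E →L[ℝ] E} {T' : E →L[ℝ] E}
    (hTadj : ∀ n, IsSelfAdjoint (T n)) {b : ℕ → E} {b' : E} {Ψ : E → ℝ} {g : E → E}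
    {H : E → E →L[ℝ] E} (hΨ : ConvexOn ℝ Set.univ Ψ) (hg : ∀ x, HasGradientAt Ψ (g x) x)
    (hH : ∀ x, HasFDerivAt g (H x) x) (hHcont : Continuous H)
    (hTsum : Summable fun n => ‖T n - T (n + 1)‖) (hT : Tendsto T atTop (𝓝 T'))
    (hbsum : Summable fun n => ‖b n - b (n + 1)‖) (hb : Tendsto b atTop (𝓝 b'))
    {B : E → E →L[ℝ] E} {V : E →L[ℝ] E} (hBV : ∀ x, B x ≤ V) {S : ℕ → Submodule ℝ E}
    {h : ℕ → E} (hhS : ∀ n, h n ∈ S n) (hgradS : ∀ n, T n (h n) - b n + g (h n) ∈ S n)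
    (hmin : ∀ n, IsMinOn (quadSurrogate (quadObjective (T n) (b n) Ψ)
      (T n (h n) - b n + g (h n)) (T n + B (h n)) (h n)) (S n) (h (n + 1)))
    (hmaj : ∀ n, quadObjective (T n) (b n) Ψ (h (n + 1)) ≤
      quadSurrogate (quadObjective (T n) (b n) Ψ) (T n (h n) - b n + g (h n)) (T n + B (h n))
        (h n) (h (n + 1)))
    {c : ℝ} (hc : 0 < c) (hcT : c • 1 ≤ T') {ε : ℝ} (hε : 0 < ε) :
    ∀ᶠ n in atTop, T' - ε • 1 ≤ T n + H (h n) ∧ IsUnit (T n + H (h n)) ∧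
      quadObjective (T n) (b n) Ψ (h n) - ⨅ x, quadObjective (T n) (b n) Ψ x ≤
        1 / 2 * (1 + ε) * ⟪T n (h n) - b n + g (h n),
          (T n + H (h n))⁻¹ʳ (T n (h n) - b n + g (h n))⟫ := by
  set L : ℝ := ‖T'‖ + 1 + ‖V‖
  have hL : 0 < L := by positivity
  have hcurv : ∀ᶠ n in atTop, ∀ x u, ⟪(T n + B x) u, u⟫ ≤ L * ‖u‖ ^ 2 := by
    filter_upwards [hT.norm.eventually_le_const (lt_add_one ‖T'‖)] with n hn x u
    rw [_root_.add_apply, inner_add_left]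
    have hTu := (le_abs_self _).trans (abs_inner_map_self_le (T n) u)
    have hBu := (inner_map_self_le_of_le (hBV x) u).trans <|
      (le_abs_self _).trans (abs_inner_map_self_le V u)
    linarith [mul_le_mul_of_nonneg_right hn (sq_nonneg ‖u‖)]
  obtain ⟨hgrad, x, hh⟩ := tendsto_gradient_and_iterates_of_sufficient_decrease hc hcT hT hTsum
    hb hbsum hΨ hg hH (by positivity : 0 < 1 / (2 * L)) <| hcurv.mono fun n hn =>
      le_sub_of_isMinOn_quadSurrogate hL (hn (h n)) (hhS n) (hgradS n) (hmin n) (hmaj n)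
  filter_upwards [eventually_sub_smul_one_le_of_tendsto hcT hT hTadj hΨ hg hH hε,
    eventually_sub_iInf_le_of_tendsto hc hcT hT hTadj hΨ hg hH hHcont.continuousAt hgrad hh hε]
    with n hle hbound using ⟨hle (h n), hbound⟩

section EuclideanMatrix

lemma map_ringInverse_of_isUnit {M M' F : Type*} [MonoidWithZero M] [MonoidWithZero M']
    [FunLike F M M'] [MonoidHomClass F M M'] (f : F) {a : M} (ha : IsUnit a) :
    f a⁻¹ʳ = (f a)⁻¹ʳ := by
  obtain ⟨u, rfl⟩ := ha
  have hmap : f u = (Units.map (f : M →* M') u : M') := rfl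
  rw [hmap, Ring.inverse_unit, Ring.inverse_unit]
  rfl

variable {N : ℕ}

lemma ofEuc_dotProduct_ofEuc (v w : EuclideanSpace ℝ (Fin N)) :
    ofEuc v ⬝ᵥ ofEuc w = ⟪v, w⟫ := by
  simp [ofEuc, EuclideanSpace.inner_eq_star_dotProduct, dotProduct_comm]

lemma qf_eq_inner (M : Matrix (Fin N) (Fin N) ℝ) (v : EuclideanSpace ℝ (Fin N)) :
    qf M v = ⟪toEuclideanCLM (𝕜 := ℝ) M v, v⟫ := by
  rw [real_inner_comm, inner_toEuclideanCLM]
  rfl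

lemma rangeD_eq_range {M : ℕ} (D : Matrix (Fin N) (Fin M) ℝ) :
    rangeD D = LinearMap.range (toEuclideanLin D) := by
  ext x
  simp only [rangeD, toEuc, Set.mem_ofPred_eq, SetLike.mem_coe, LinearMap.mem_range]
  exact ⟨fun ⟨u, hu⟩ => ⟨WithLp.toLp 2 u, hu.symm⟩, fun ⟨u, hu⟩ => ⟨u.ofLp, hu.symm⟩⟩

lemma toEuclideanCLM_le_iff {ι : Type*} [Fintype ι] [DecidableEq ι] {A B : Matrix ι ι ℝ} :
    toEuclideanCLM (𝕜 := ℝ) A ≤ toEuclideanCLM (𝕜 := ℝ) B ↔ (B - A).PosSemidef := by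
  rw [ContinuousLinearMap.le_def, ← map_sub, ← ContinuousLinearMap.isPositive_toLinearMap_iff,
    coe_toEuclideanCLM_eq_toEuclideanLin, isPositive_toEuclideanLin_iff]

lemma inner_ringInverse_toEuclideanCLM {M : Matrix (Fin N) (Fin N) ℝ} (hM : IsUnit M)
    (v : EuclideanSpace ℝ (Fin N)) :
    ⟪v, (toEuclideanCLM (𝕜 := ℝ) M)⁻¹ʳ v⟫ = ofEuc v ⬝ᵥ M⁻¹ *ᵥ ofEuc v := by
  rw [← map_ringInverse_of_isUnit _ hM, ← nonsing_inv_eq_ringInverse, inner_toEuclideanCLM]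
  rfl

lemma continuous_toEuclideanCLM {ι : Type*} [Fintype ι] [DecidableEq ι] :
    Continuous (toEuclideanCLM (n := ι) (𝕜 := ℝ)) :=
  LinearMap.continuous_of_finiteDimensional
    (toEuclideanCLM (n := ι) (𝕜 := ℝ)).toAlgEquiv.toLinearEquiv.toLinearMap

lemma tendsto_toEuclideanCLM {ι κ : Type*} [Fintype ι] [DecidableEq ι] {l : Filter κ}
    {A : κ → Matrix ι ι ℝ} {A' : Matrix ι ι ℝ}
    (hA : ∀ i j, Tendsto (fun n => A n i j) l (𝓝 (A' i j))) :
    Tendsto (fun n => toEuclideanCLM (𝕜 := ℝ) (A n)) l (𝓝 (toEuclideanCLM (𝕜 := ℝ) A')) :=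
  (continuous_toEuclideanCLM.tendsto A').comp <|
    tendsto_pi_nhds.2 fun i => tendsto_pi_nhds.2 fun j => hA i j

lemma summable_norm_toEuclideanCLM_sub {ι κ : Type*} [Fintype ι] [DecidableEq ι]
    {A B : κ → Matrix ι ι ℝ} (hAB : ∀ i j, Summable fun n => |A n i j - B n i j|) :
    Summable fun n => ‖toEuclideanCLM (𝕜 := ℝ) (A n) - toEuclideanCLM (𝕜 := ℝ) (B n)‖ := by
  have hentries : Summable fun n => A n - B n :=
    Pi.summable.2 fun i => Pi.summable.2 fun j => (hAB i j).of_abs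
  simpa [Function.comp_def] using
    (hentries.map (toEuclideanCLM (n := ι) (𝕜 := ℝ)) continuous_toEuclideanCLM).norm

end EuclideanMatrix

end

theorem mm_lemma_suboptimality_bound
    {N : ℕ} (hN : 0 < N)
    (R : Matrix (Fin N) (Fin N) ℝ) (hRpd : R.PosDef)
    (r : EuclideanSpace ℝ (Fin N))
    (Ψ : EuclideanSpace ℝ (Fin N) → ℝ)
    (hΨbdd : BddBelow (Set.range Ψ))
    (hΨconv : ConvexOn ℝ Set.univ Ψ)
    (hΨC2 : ContDiff ℝ 2 Ψ)
    (gradΨ : EuclideanSpace ℝ (Fin N) → EuclideanSpace ℝ (Fin N))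
    (hgradΨ : ∀ x, HasGradientAt Ψ (gradΨ x) x)
    (hessΨ : EuclideanSpace ℝ (Fin N) → Matrix (Fin N) (Fin N) ℝ)
    (hhessΨ : ∀ x, HasFDerivAt gradΨ
      (LinearMap.toContinuousLinearMap (Matrix.toEuclideanLin (hessΨ x))) x)
    (F : EuclideanSpace ℝ (Fin N) → ℝ)
    (hF : ∀ x, F x = (1/2) * qf R x - ofEuc r ⬝ᵥ ofEuc x + Ψ x)
    (Rn : ℕ → Matrix (Fin N) (Fin N) ℝ) (hRnpsd : ∀ n, (Rn n).PosSemidef)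
    (rn : ℕ → EuclideanSpace ℝ (Fin N))
    (Fn : ℕ → EuclideanSpace ℝ (Fin N) → ℝ)
    (hFn : ∀ n x, Fn n x = (1/2) * qf (Rn n) x - ofEuc (rn n) ⬝ᵥ ofEuc x + Ψ x)
    (B : EuclideanSpace ℝ (Fin N) → Matrix (Fin N) (Fin N) ℝ)
    (hBpsd : ∀ x, (B x).PosSemidef)
    (An : ℕ → EuclideanSpace ℝ (Fin N) → Matrix (Fin N) (Fin N) ℝ)
    (hAn : ∀ n x, An n x = Rn n + B x)
    (gradFn : ℕ → EuclideanSpace ℝ (Fin N) → EuclideanSpace ℝ (Fin N))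
    (hgradFn : ∀ n x, HasGradientAt (Fn n) (gradFn n x) x)
    (Θ : ℕ → EuclideanSpace ℝ (Fin N) → EuclideanSpace ℝ (Fin N) → ℝ)
    (hΘ : ∀ n x y, Θ n x y =
      Fn n y + ofEuc (gradFn n y) ⬝ᵥ ofEuc (x - y) + (1/2) * qf (An n y) (x - y))
    (M : ℕ → ℕ) (D : (n : ℕ) → Matrix (Fin N) (Fin (M n)) ℝ)
    (h : ℕ → EuclideanSpace ℝ (Fin N))
    (halg : ∀ n, h (n+1) ∈ rangeD (D n) ∧
      ∀ y ∈ rangeD (D n), Θ n (h (n+1)) (h n) ≤ Θ n y (h n))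
    (hmaj : ∀ n x, Fn n x ≤ Θ n x (h n))
    (ha1r : Summable (fun n => ‖rn n - rn (n+1)‖))
    (ha1R : ∀ i j, Summable (fun n => |Rn n i j - Rn (n+1) i j|))
    (ha1rlim : Tendsto rn atTop (𝓝 r))
    (ha1Rlim : ∀ i j, Tendsto (fun n => Rn n i j) atTop (𝓝 (R i j)))
    (ha2i : ∀ n, gradFn n (h n) ∈ rangeD (D n) ∧ h n ∈ rangeD (D n))
    (V : Matrix (Fin N) (Fin N) ℝ) (hVpd : V.PosDef)
    (ha2ii : ∀ x, (B x - hessΨ x).PosSemidef ∧ (V - B x).PosSemidef)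
    (ha2iii : (∀ n, rn n = r ∧ Rn n = R) ∨
      (∃ c : ℝ, ∀ x, ‖mulE (B x) x - gradΨ x‖ ≤ c))
    (ε : ℝ) (hε : 0 < ε)
    (hεR : (R - ε • (1 : Matrix (Fin N) (Fin N) ℝ)).PosDef)
    :
    ∃ nε : ℕ, 1 ≤ nε ∧ ∀ n ≥ nε,
      ((Rn n + hessΨ (h n)) - (R - ε • (1 : Matrix (Fin N) (Fin N) ℝ))).PosSemidef ∧
      (Rn n + hessΨ (h n)).PosDef ∧
      Fn n (h n) - (⨅ x, Fn n x) ≤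
        (1/2) * (1 + ε) *
          (ofEuc (gradFn n (h n)) ⬝ᵥ
            (Rn n + hessΨ (h n))⁻¹.mulVec (ofEuc (gradFn n (h n)))) := by
  obtain rfl : Fn = fun n => quadObjective (toEuclideanCLM (𝕜 := ℝ) (Rn n)) (rn n) Ψ :=
    funext₂ fun n x => by rw [hFn, quadObjective, qf_eq_inner, ofEuc_dotProduct_ofEuc]
  have hadj (n : ℕ) : IsSelfAdjoint (toEuclideanCLM (𝕜 := ℝ) (Rn n)) :=
    (hRnpsd n).isHermitian.isSelfAdjoint.map _
  obtain rfl : gradFn = fun n x => toEuclideanCLM (𝕜 := ℝ) (Rn n) x - rn n + gradΨ x :=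
    funext₂ fun n x => (hgradFn n x).unique (hasGradientAt_quadObjective (hadj n) (hgradΨ x))
  simp only [rangeD_eq_range, hΘ, hAn, qf_eq_inner, ofEuc_dotProduct_ofEuc, map_add]
    at halg hmaj ha2i
  have hbound := mm_lemma_suboptimality_bound_general hadj hΨconv hgradΨ
    (H := fun x => toEuclideanCLM (𝕜 := ℝ) (hessΨ x)) hhessΨ
    (continuous_hessian hΨC2 hgradΨ hhessΨ) (summable_norm_toEuclideanCLM_sub ha1R)
    (tendsto_toEuclideanCLM ha1Rlim) ha1r ha1rlim
    (fun x => toEuclideanCLM_le_iff.2 (ha2ii x).2) (fun n => (ha2i n).2) (fun n => (ha2i n).1)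
    (fun n => (halg n).2) (fun n => hmaj n _) hε
    (by simpa using toEuclideanCLM_le_iff.2 hεR.posSemidef) hε
  obtain ⟨nε, hnε⟩ := (hbound.and (eventually_ge_atTop 1)).exists_forall_of_atTop
  refine ⟨nε, (hnε nε le_rfl).2, fun n hn => ?_⟩
  obtain ⟨⟨hle, -, hsub⟩, -⟩ := hnε n hn
  have hpsd : (Rn n + hessΨ (h n) - (R - ε • (1 : Matrix _ _ ℝ))).PosSemidef :=
    toEuclideanCLM_le_iff.1 (by simpa using hle)
  have hpd : (Rn n + hessΨ (h n)).PosDef := by simpa using hεR.add_posSemidef hpsd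
  rw [← map_add, inner_ringInverse_toEuclideanCLM hpd.isUnit] at hsub
  exact ⟨hpsd, hpd, hsub⟩
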